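/- Let f,g∈𝒮 with |f'(x)|≥|g'(x)| for every x∈[0,1] (one-sided derivatives at the turning points), with c_f=c_g=:c, and with |c−a_f|/|c−a'_f| ≥ |c−a_g|/|c−a'_g|. Then I_f ⊇ I_g. -/

import Mathlib

open Set Function

/-- The function χ_g: 1/2 where (g(x)−x)(g(g(x))−g(x)) ≤ 0, and 0 otherwise. -/
noncomputable def chi (g : ℝ → ℝ) (x : ℝ) : ℝ :=
  if (g x - x) * (g (g x) - g x) ≤ 0 then 1 / 2 else 0

/-- Over-rotation number of a periodic point `y` of `g`. -/
noncomputable def overRotNum (g : ℝ → ℝ) (y : ℝ) : ℝ :=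
  (∑ i ∈ Finset.range (Function.minimalPeriod g y), chi g (g^[i] y)) /
    (Function.minimalPeriod g y : ℝ)

/-- The over-rotation interval of `g` on the domain `s`: the closure of the set of
over-rotation numbers of periodic non-fixed points of `g` in `s`. -/
def overRotInterval (g : ℝ → ℝ) (s : Set ℝ) : Set ℝ :=
  closure { r : ℝ | ∃ y ∈ s, y ∈ Function.periodicPts g ∧ g y ≠ y ∧ overRotNum g y = r }

/-- `f` is piecewise monotone on `[a,b]`. -/
def PiecewiseMonotoneOn (f : ℝ → ℝ) (a b : ℝ) : Prop :=
  ∃ n : ℕ, ∃ t : Fin (n + 1) → ℝ, StrictMono t ∧ t 0 = a ∧ t (Fin.last n) = b ∧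
    ∀ i : Fin n, MonotoneOn f (Set.Icc (t i.castSucc) (t i.succ)) ∨
      AntitoneOn f (Set.Icc (t i.castSucc) (t i.succ))


/-- The class 𝒮: concave maps of `[0,1]` into itself with `f(0)=f(1)=0`, a unique turning
point `c ∈ (0,1)` which is a maximum with `f(c) > c`, and `C¹` on `[0,c]` and on `[c,1]`. -/
structure SClass (f : ℝ → ℝ) (c : ℝ) : Prop where
  maps : Set.MapsTo f (Set.Icc 0 1) (Set.Icc 0 1)
  f0 : f 0 = 0
  f1 : f 1 = 0
  hc : c ∈ Set.Ioo (0:ℝ) 1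
  concave : ConcaveOn ℝ (Set.Icc 0 1) f
  mono : StrictMonoOn f (Set.Icc 0 c)
  anti : StrictAntiOn f (Set.Icc c 1)
  fcgt : c < f c
  smoothL : ContDiffOn ℝ 1 f (Set.Icc 0 c)
  smoothR : ContDiffOn ℝ 1 f (Set.Icc c 1)

/-!
The points left of the fixed point `a` on an orbit of a unimodal map `h` form an orbit of the first
return map to `(-∞, a]`, and a periodic orbit with `Q` returns, `q` of which cross `a`, has
over-rotation number `q / (Q + q)`. So it suffices to turn every such cycle of `g` into one of `f`
with the same `Q` and `q`. Conjugating `f` by the homothety centred at the turning point that takes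
`a_f` to `a_g` gives a map `h` with the fixed point of `g`, and concavity of `f` makes both
increasing branches of the first return map of `h` lie below those of `g`.

Prescribe for `h` the itinerary of a rotation with `q` crossings in `Q` returns and let `Y` be the
greatest solution of the corresponding inverse-branch equations; here `q < Q`, as for `q = Q` a
fixed point of `h ∘ h` does. If no point of `Y` lies below the lowest return value `h (h c)`, then
`Y` is a cycle of `h`. Otherwise measure the position of a point by its rank, the number of points
of `Y` to the left of it. Along the given cycle of `g` each return raises the rank by at least `q`,
with `Q` subtracted at a crossing, and by more when it uses the decreasing branch; these bounds add
up to zero over the cycle, so it avoids the decreasing branch. Its points then bound from below a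
solution of the inverse-branch equations of `h` for the itinerary of the cycle itself, and that
solution is a cycle of `h`.
-/

theorem birkhoffSum_mul_of_isPeriodicPt {α M : Type*} [AddCommMonoid M] {f : α → α} {φ : α → M}
    {x : α} {p : ℕ} (hx : IsPeriodicPt f p x) (r : ℕ) :
    birkhoffSum f φ (p * r) x = r • birkhoffSum f φ p x := by
  induction r with
  | zero => simp
  | succ r ih => rw [Nat.mul_succ, birkhoffSum_add, ih, hx.mul_const r, succ_nsmul]

section OverRotationNumber

variable {h : ℝ → ℝ} {x : ℝ}

theorem chi_eq_zero_of_lt_of_lt (h₁ : x < h x) (h₂ : h x < h (h x)) : chi h x = 0 :=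
  if_neg (mul_pos (sub_pos.2 h₁) (sub_pos.2 h₂)).not_ge

theorem chi_eq_half_of_lt_of_gt (h₁ : x < h x) (h₂ : h (h x) < h x) : chi h x = 1 / 2 :=
  if_pos (mul_nonpos_of_nonneg_of_nonpos (sub_nonneg.2 h₁.le) (sub_nonpos.2 h₂.le))

theorem chi_eq_half_of_gt_of_lt (h₁ : h x < x) (h₂ : h x < h (h x)) : chi h x = 1 / 2 :=
  if_pos (mul_nonpos_of_nonpos_of_nonneg (sub_nonpos.2 h₁.le) (sub_nonneg.2 h₂.le))

theorem overRotNum_eq_birkhoffSum_div {p : ℕ} (hp : 0 < p) (hx : IsPeriodicPt h p x) :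
    overRotNum h x = birkhoffSum h (chi h) p x / p := by
  obtain ⟨r, rfl⟩ := hx.minimalPeriod_dvd
  have hr : 0 < r := Nat.pos_of_mul_pos_left hp
  rw [birkhoffSum_mul_of_isPeriodicPt (isPeriodicPt_minimalPeriod h x), nsmul_eq_mul,
    Nat.cast_mul, mul_comm, mul_div_mul_right _ _ (Nat.cast_ne_zero.2 hr.ne')]
  rfl

theorem overRotNum_map (hx : x ∈ periodicPts h) : overRotNum h (h x) = overRotNum h x := by
  obtain ⟨p, hp, hper⟩ := hx
  have hsum := birkhoffSum_apply_sub_birkhoffSum h (chi h) p x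
  rw [hper, sub_self, sub_eq_zero] at hsum
  rw [overRotNum_eq_birkhoffSum_div hp hper, overRotNum_eq_birkhoffSum_div hp hper.apply,
    hsum]

end OverRotationNumber

section Conjugacy

variable {f : ℝ → ℝ} (e : ℝ ≃o ℝ) (x : ℝ)

theorem chi_conj : chi (e.toEquiv.conj f) (e x) = chi f x := by
  simp [chi, mul_nonpos_iff]

theorem overRotNum_conj : overRotNum (e.toEquiv.conj f) (e x) = overRotNum f x := by
  have hsemi : Semiconj e f (e.toEquiv.conj f) := e.toEquiv.semiconj_conj f
  have hiter (n : ℕ) : (e.toEquiv.conj f)^[n] (e x) = e (f^[n] x) :=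
    (hsemi.iterate_right n x).symm
  have hmin : minimalPeriod (e.toEquiv.conj f) (e x) = minimalPeriod f x :=
    minimalPeriod_eq_minimalPeriod_iff.2 fun n => by
      rw [IsPeriodicPt, IsPeriodicPt, IsFixedPt, IsFixedPt, hiter, e.injective.eq_iff]
  simp only [overRotNum, hmin, hiter, chi_conj]

theorem overRotInterval_conj_image_subset (s : Set ℝ) :
    overRotInterval (e.toEquiv.conj f) (e '' s) ⊆ overRotInterval f s := by
  refine closure_mono ?_
  rintro r ⟨_, ⟨x, hx, rfl⟩, ⟨p, hp, hper⟩, hne, rfl⟩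
  have hsemi : Semiconj e f (e.toEquiv.conj f) := e.toEquiv.semiconj_conj f
  refine ⟨x, hx, ⟨p, hp, e.injective ?_⟩, fun hfix => hne ?_, (overRotNum_conj e x).symm⟩
  · rw [hsemi.iterate_right p x]
    exact hper
  · rw [← hsemi x, hfix]

end Conjugacy

section FirstReturn

/-- The first return map of `h` to `(-∞, a]`, under the assumption that `h` maps points to the
right of `a` to the left of `a`. -/
noncomputable def firstReturn (h : ℝ → ℝ) (a x : ℝ) : ℝ :=
  if h x ≤ a then h x else h (h x)

/-- The number of visits to the right of `a` of the orbit of `x` during its first `n` returns: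
each visit lasts one step, so `n` returns take `n + crossings h a x n` iterations of `h`. -/
noncomputable def crossings (h : ℝ → ℝ) (a x : ℝ) (n : ℕ) : ℕ :=
  Nat.count (fun i => a < h ((firstReturn h a)^[i] x)) n

/-- The point `x` starts a cycle of `Q` returns, `q` of which cross `a`, that stays in `(z, a)`. -/
structure IsReturnCycle (h : ℝ → ℝ) (z a : ℝ) (Q q : ℕ) (x : ℝ) : Prop where
  pos : 0 < Q
  isPeriodicPt : IsPeriodicPt (firstReturn h a) Q x
  mem : ∀ n, (firstReturn h a)^[n] x ∈ Ioo z a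
  crossings_eq : crossings h a x Q = q

variable {h : ℝ → ℝ} {z a x : ℝ} {Q q : ℕ}

theorem firstReturn_of_le (hx : h x ≤ a) : firstReturn h a x = h x := if_pos hx

theorem firstReturn_of_lt (hx : a < h x) : firstReturn h a x = h (h x) := if_neg hx.not_ge

theorem crossings_succ (h : ℝ → ℝ) (a x : ℝ) (n : ℕ) : crossings h a x (n + 1) =
    crossings h a x n + if a < h ((firstReturn h a)^[n] x) then 1 else 0 :=
  Nat.count_succ _ n

theorem iterate_add_crossings (h : ℝ → ℝ) (a x : ℝ) (n : ℕ) :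
    h^[n + crossings h a x n] x = (firstReturn h a)^[n] x := by
  induction n with
  | zero => rfl
  | succ n ih =>
    rw [crossings_succ, iterate_succ_apply' (firstReturn h a)]
    split_ifs with hcross
    · rw [firstReturn_of_lt hcross, ← ih, ← iterate_succ_apply' h, ← iterate_succ_apply' h]
      congr 2
      omega
    · rw [firstReturn_of_le (not_lt.1 hcross), ← ih, ← iterate_succ_apply' h]
      congr 2
      omega

theorem birkhoffSum_chi_add_crossings (hlt : ∀ x ∈ Ioo z a, x < h x)
    (hx : ∀ n, (firstReturn h a)^[n] x ∈ Ioo z a) (n : ℕ) :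
    birkhoffSum h (chi h) (n + crossings h a x n) x = crossings h a x n := by
  induction n with
  | zero => simp [crossings]
  | succ n ih =>
    have hu := hx n
    have hFu := hx (n + 1)
    have hiter := iterate_add_crossings h a x n
    rw [crossings_succ]
    rw [iterate_succ_apply'] at hFu
    set u := (firstReturn h a)^[n] x
    set m := crossings h a x n
    split_ifs with hcross
    · rw [firstReturn_of_lt hcross] at hFu
      have hback : h (h u) < h u := hFu.2.trans hcross
      rw [show n + 1 + (m + 1) = n + m + 1 + 1 by ring, birkhoffSum_succ, birkhoffSum_succ, ih,
        iterate_succ_apply', hiter, chi_eq_half_of_lt_of_gt (hlt u hu) hback,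
        chi_eq_half_of_gt_of_lt hback (hlt _ hFu), add_assoc, add_halves, Nat.cast_succ]
    · rw [firstReturn_of_le (not_lt.1 hcross)] at hFu
      rw [add_zero, add_right_comm, birkhoffSum_succ, ih, hiter,
        chi_eq_zero_of_lt_of_lt (hlt u hu) (hlt _ hFu), add_zero]

theorem exists_add_crossings_eq (h : ℝ → ℝ) (a x : ℝ) (p : ℕ) :
    ∃ n, n + crossings h a x n = p ∨
      (n + crossings h a x n + 1 = p ∧ a < h ((firstReturn h a)^[n] x)) := by
  induction p with
  | zero => exact ⟨0, .inl rfl⟩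
  | succ p ih =>
    obtain ⟨n, hn⟩ := ih
    have hsucc := crossings_succ h a x n
    split_ifs at hsucc with hcross
    · rcases hn with hn | ⟨hn, -⟩
      · exact ⟨n, .inr ⟨by omega, hcross⟩⟩
      · exact ⟨n + 1, .inl (by omega)⟩
    · rcases hn with hn | ⟨-, hn⟩
      · exact ⟨n + 1, .inl (by omega)⟩
      · exact absurd hn hcross

theorem IsReturnCycle.isPeriodicPt_add (hx : IsReturnCycle h z a Q q x) :
    IsPeriodicPt h (Q + q) x := by
  have hiter := iterate_add_crossings h a x Q
  rwa [hx.crossings_eq, hx.isPeriodicPt] at hiter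

theorem IsReturnCycle.overRotNum_eq (hx : IsReturnCycle h z a Q q x)
    (hlt : ∀ x ∈ Ioo z a, x < h x) : overRotNum h x = q / (Q + q : ℕ) := by
  have hsum := birkhoffSum_chi_add_crossings hlt hx.mem Q
  rw [hx.crossings_eq] at hsum
  rw [overRotNum_eq_birkhoffSum_div (Nat.add_pos_left hx.pos q) hx.isPeriodicPt_add, hsum]

theorem exists_isReturnCycle_of_isPeriodicPt {p : ℕ} (hp : 0 < p) (hper : IsPeriodicPt h p x)
    (hx : ∀ n, (firstReturn h a)^[n] x ∈ Ioo z a) : ∃ Q q, IsReturnCycle h z a Q q x := by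
  obtain ⟨n, hn | ⟨hn, hcross⟩⟩ := exists_add_crossings_eq h a x p
  · refine ⟨n, _, Nat.pos_of_ne_zero ?_, ?_, hx, rfl⟩
    · rintro rfl
      simp only [crossings, Nat.count_zero] at hn
      omega
    · rw [IsPeriodicPt, IsFixedPt, ← iterate_add_crossings, hn, hper]
  · rw [← iterate_add_crossings, ← iterate_succ_apply' h, Nat.succ_eq_add_one, hn, hper] at hcross
    exact absurd hcross (hx 0).2.not_gt

theorem exists_lt_succ_le_of_eq {α : Type*} [LinearOrder α] {u : ℕ → α} (hQ : 0 < Q)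
    (hu : u Q = u 0) : ∃ n < Q, u (n + 1) ≤ u n := by
  by_contra! hlt
  have hmono : StrictMonoOn u (Iic Q) :=
    strictMonoOn_of_lt_add_one ordConnected_Iic fun n _ _ hn => hlt n hn
  exact (hmono (Nat.zero_le Q) self_mem_Iic hQ).ne hu.symm

theorem IsReturnCycle.exists_crossing_le (hx : IsReturnCycle h z a Q q x)
    (hlt : ∀ x ∈ Ioo z a, x < h x) : ∃ n < Q, a < h ((firstReturn h a)^[n] x) ∧
      h (h ((firstReturn h a)^[n] x)) ≤ (firstReturn h a)^[n] x := by
  obtain ⟨n, hnQ, hn⟩ := exists_lt_succ_le_of_eq (u := fun n => (firstReturn h a)^[n] x) hx.pos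
    hx.isPeriodicPt
  simp only [iterate_succ_apply'] at hn
  have hcross : a < h ((firstReturn h a)^[n] x) := by
    by_contra! hle
    rw [firstReturn_of_le hle] at hn
    exact hn.not_gt (hlt _ (hx.mem n))
  rw [firstReturn_of_lt hcross] at hn
  exact ⟨n, hnQ, hcross, hn⟩

theorem IsReturnCycle.crossings_pos (hx : IsReturnCycle h z a Q q x)
    (hlt : ∀ x ∈ Ioo z a, x < h x) : 0 < q := by
  obtain ⟨n, hnQ, hcross, -⟩ := hx.exists_crossing_le hlt
  rw [← hx.crossings_eq, Nat.pos_iff_ne_zero]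
  exact Nat.count_ne_iff_exists.2 ⟨n, hnQ, hcross⟩

end FirstReturn

/-- A unimodal self-map of `[z, w]` with turning point `c`, fixed endpoint `z`, fixed point `a` to
the right of `c`, the point `A` to the left of `c` with the same image as `a`, and no fixed points
in `(z, c]`. Its first return map to `[z, a]` has the increasing branches `[z, A]` and `[c, a]` and
the decreasing branch `(A, c)`. -/
structure UnimodalMap (h : ℝ → ℝ) (z w c a A : ℝ) : Prop where
  A_mem : A ∈ Ioo z c
  a_mem : a ∈ Ioc c w
  cont : ContinuousOn h (Icc z w)
  maps : MapsTo h (Icc z w) (Icc z w)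
  mono : StrictMonoOn h (Icc z c)
  anti : StrictAntiOn h (Icc c w)
  map_z : h z = z
  map_a : h a = a
  map_A : h A = a
  lt_map_of_mem_Ioc : ∀ x ∈ Ioc z c, x < h x

namespace UnimodalMap

variable {h : ℝ → ℝ} {z w c a A x y : ℝ}

theorem z_lt_c (H : UnimodalMap h z w c a A) : z < c := H.A_mem.1.trans H.A_mem.2

theorem c_lt_w (H : UnimodalMap h z w c a A) : c < w := H.a_mem.1.trans_le H.a_mem.2

theorem c_mem (H : UnimodalMap h z w c a A) : c ∈ Icc z w := ⟨H.z_lt_c.le, H.c_lt_w.le⟩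

theorem lt_map_of_mem_Ioo (H : UnimodalMap h z w c a A) (hx : x ∈ Ioo A a) : a < h x := by
  rcases le_total x c with hxc | hcx
  · rw [← H.map_A]
    exact H.mono ⟨H.A_mem.1.le, H.A_mem.2.le⟩ ⟨(H.A_mem.1.trans hx.1).le, hxc⟩ hx.1
  · rw [← H.map_a]
    exact H.anti ⟨hcx, hx.2.le.trans H.a_mem.2⟩ ⟨H.a_mem.1.le, H.a_mem.2⟩ hx.2

theorem le_of_map_le (H : UnimodalMap h z w c a A) (hx : x < a) (hhx : h x ≤ a) : x ≤ A :=
  not_lt.1 fun hA => hhx.not_gt (H.lt_map_of_mem_Ioo ⟨hA, hx⟩)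

theorem lt_map (H : UnimodalMap h z w c a A) (hx : x ∈ Ioo z a) : x < h x := by
  rcases le_or_gt x c with hxc | hcx
  · exact H.lt_map_of_mem_Ioc x ⟨hx.1, hxc⟩
  · exact hx.2.trans (H.lt_map_of_mem_Ioo ⟨H.A_mem.2.trans hcx, hx.2⟩)

theorem map_lt_of_mem_Ioc (H : UnimodalMap h z w c a A) (hx : x ∈ Ioc a w) : h x < a := by
  rw [← H.map_a]
  exact H.anti ⟨H.a_mem.1.le, H.a_mem.2⟩ ⟨(H.a_mem.1.trans hx.1).le, hx.2⟩ hx.1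

theorem map_le_of_mem_Icc (H : UnimodalMap h z w c a A) (hx : x ∈ Icc z A) : h x ≤ a := by
  rw [← H.map_A]
  exact H.mono.monotoneOn ⟨hx.1, hx.2.trans H.A_mem.2.le⟩ ⟨H.A_mem.1.le, H.A_mem.2.le⟩ hx.2

theorem map_mem_of_mem_Icc (H : UnimodalMap h z w c a A) (hx : x ∈ Icc c a) : h x ∈ Icc a w := by
  have hxw : x ≤ w := hx.2.trans H.a_mem.2
  refine ⟨?_, (H.maps ⟨H.z_lt_c.le.trans hx.1, hxw⟩).2⟩
  rw [← H.map_a]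
  exact H.anti.antitoneOn ⟨hx.1, hxw⟩ ⟨H.a_mem.1.le, H.a_mem.2⟩ hx.2

theorem map_le_map_c (H : UnimodalMap h z w c a A) (hx : x ∈ Icc z w) : h x ≤ h c := by
  rcases le_total x c with hxc | hcx
  · exact H.mono.monotoneOn ⟨hx.1, hxc⟩ ⟨H.z_lt_c.le, le_rfl⟩ hxc
  · exact H.anti.antitoneOn ⟨le_rfl, H.c_lt_w.le⟩ ⟨hcx, hx.2⟩ hcx

theorem map_map_c_mem (H : UnimodalMap h z w c a A) : h (h c) ∈ Ico z a :=
  ⟨(H.maps (H.maps H.c_mem)).1, H.map_lt_of_mem_Ioc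
    ⟨H.lt_map_of_mem_Ioo ⟨H.A_mem.2, H.a_mem.1⟩, (H.maps H.c_mem).2⟩⟩

theorem continuousOn_comp_self (H : UnimodalMap h z w c a A) :
    ContinuousOn (h ∘ h) (Icc z w) :=
  H.cont.comp H.cont H.maps

theorem monotoneOn_comp_self (H : UnimodalMap h z w c a A) : MonotoneOn (h ∘ h) (Icc c a) := by
  have hsub : Icc a w ⊆ Icc c w := Icc_subset_Icc_left H.a_mem.1.le
  intro x hx y hy hxy
  refine H.anti.antitoneOn (hsub (H.map_mem_of_mem_Icc hy)) (hsub (H.map_mem_of_mem_Icc hx)) ?_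
  exact H.anti.antitoneOn ⟨hx.1, hx.2.trans H.a_mem.2⟩ ⟨hy.1, hy.2.trans H.a_mem.2⟩ hxy

theorem firstReturn_mem (H : UnimodalMap h z w c a A) {s : Set ℝ} (hs : MapsTo h s s)
    (hsI : s ⊆ Icc z w) (has : a ∉ s) (hx : x ∈ s) : firstReturn h a x ∈ s ∩ Iio a := by
  rcases le_or_gt (h x) a with hle | hgt
  · rw [firstReturn_of_le hle]
    exact ⟨hs hx, hle.lt_of_ne (ne_of_mem_of_not_mem (hs hx) has)⟩
  · rw [firstReturn_of_lt hgt]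
    exact ⟨hs (hs hx), H.map_lt_of_mem_Ioc ⟨hgt, (hsI (hs hx)).2⟩⟩

theorem exists_isReturnCycle (H : UnimodalMap h z w c a A) (hy : y ∈ Icc z w)
    (hper : y ∈ periodicPts h) (hne : h y ≠ y) :
    ∃ x Q q, IsReturnCycle h z a Q q x ∧ overRotNum h x = overRotNum h y := by
  let s : Set ℝ := {v | v ∈ Icc z w ∧ v ∈ periodicPts h ∧ h v ≠ v}
  have hs : MapsTo h s s := fun v ⟨hv, hvper, hvne⟩ =>
    have hhv := (bijOn_periodicPts h).mapsTo hvper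
    ⟨H.maps hv, hhv, fun heq => hvne ((bijOn_periodicPts h).injOn hhv hvper heq)⟩
  have hzs : z ∉ s := fun hz => hz.2.2 H.map_z
  have has : a ∉ s := fun ha => ha.2.2 H.map_a
  obtain ⟨x, ⟨hxs, hxa⟩, hρ⟩ : ∃ x ∈ s ∩ Iio a, overRotNum h x = overRotNum h y := by
    have hys : y ∈ s := ⟨hy, hper, hne⟩
    rcases le_or_gt y a with hya | hay
    · exact ⟨y, ⟨hys, hya.lt_of_ne (ne_of_mem_of_not_mem hys has)⟩, rfl⟩
    · exact ⟨h y, ⟨hs hys, H.map_lt_of_mem_Ioc ⟨hay, hy.2⟩⟩, overRotNum_map hper⟩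
  have horbit (n : ℕ) : (firstReturn h a)^[n] x ∈ s ∩ Iio a := by
    induction n with
    | zero => exact ⟨hxs, hxa⟩
    | succ n ih =>
      rw [iterate_succ_apply']
      exact H.firstReturn_mem hs (fun _ hv => hv.1) has ih.1
  obtain ⟨p, hp, hpx⟩ := hxs.2.1
  obtain ⟨Q, q, hcycle⟩ := exists_isReturnCycle_of_isPeriodicPt hp hpx fun n =>
    ⟨(horbit n).1.1.1.lt_of_ne' (ne_of_mem_of_not_mem (horbit n).1 hzs), (horbit n).2⟩
  exact ⟨x, Q, q, hcycle, hρ⟩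

theorem conj (H : UnimodalMap h z w c a A) (e : ℝ ≃o ℝ) :
    UnimodalMap (e.toEquiv.conj h) (e z) (e w) (e c) (e a) (e A) where
  A_mem := ⟨e.strictMono H.A_mem.1, e.strictMono H.A_mem.2⟩
  a_mem := ⟨e.strictMono H.a_mem.1, e.monotone H.a_mem.2⟩
  cont := by
    rw [← e.image_Icc, e.image_eq_preimage_symm]
    exact e.continuous.comp_continuousOn
      (H.cont.comp e.symm.continuous.continuousOn (mapsTo_preimage _ _))
  maps := by
    rw [← e.image_Icc]
    rintro _ ⟨x, hx, rfl⟩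
    simpa using H.maps hx
  mono := by
    rw [← e.image_Icc]
    rintro _ ⟨x, hx, rfl⟩ _ ⟨y, hy, rfl⟩ hxy
    simpa using H.mono hx hy (e.lt_iff_lt.1 hxy)
  anti := by
    rw [← e.image_Icc]
    rintro _ ⟨x, hx, rfl⟩ _ ⟨y, hy, rfl⟩ hxy
    simpa using H.anti hx hy (e.lt_iff_lt.1 hxy)
  map_z := by simp [H.map_z]
  map_a := by simp [H.map_a]
  map_A := by simp [H.map_A]
  lt_map_of_mem_Ioc := by
    rw [← e.image_Ioc]
    rintro _ ⟨x, hx, rfl⟩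
    simpa using H.lt_map_of_mem_Ioc x hx

end UnimodalMap

section InverseBranches

theorem insert_inter_subset_Icc {α : Type*} [Preorder α] {u v : α} (huv : u ≤ v) (s : Set α) :
    insert u (Icc u v ∩ s) ⊆ Icc u v :=
  insert_subset (left_mem_Icc.2 huv) inter_subset_left

/-- The monotone generalized inverse of `k` on `[u, v]`: the last `x` in `[u, v]` with `k x ≤ y`,
or `u` if there is none. -/
noncomputable def lastSublevel {α β : Type*} [ConditionallyCompleteLinearOrder α] [Preorder β]
    (k : α → β) (u v : α) (y : β) : α :=
  sSup (insert u (Icc u v ∩ k ⁻¹' Iic y))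

section Sublevel

variable {α β : Type*} [ConditionallyCompleteLinearOrder α] [LinearOrder β] {k : α → β}
  {u v x : α} {y : β}

theorem lastSublevel_mem (huv : u ≤ v) : lastSublevel k u v y ∈ Icc u v :=
  have hsub := insert_inter_subset_Icc huv (k ⁻¹' Iic y)
  ⟨le_csSup (bddAbove_Icc.mono hsub) (mem_insert u _),
    csSup_le (insert_nonempty u _) fun _ hx => (hsub hx).2⟩

theorem le_lastSublevel (hx : x ∈ Icc u v) (hxy : k x ≤ y) : x ≤ lastSublevel k u v y :=
  le_csSup (bddAbove_Icc.mono (insert_inter_subset_Icc (hx.1.trans hx.2) _)) (.inr ⟨hx, hxy⟩)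

theorem monotone_lastSublevel (k : α → β) (huv : u ≤ v) : Monotone (lastSublevel k u v) :=
  fun _ _ hyy' => csSup_le_csSup (bddAbove_Icc.mono (insert_inter_subset_Icc huv _))
    (insert_nonempty u _)
    (insert_subset_insert (inter_subset_inter_right _ (preimage_mono (Iic_subset_Iic.2 hyy'))))

theorem apply_lastSublevel [TopologicalSpace α] [OrderTopology α] [DenselyOrdered α]
    [TopologicalSpace β] [OrderClosedTopology β] (huv : u ≤ v) (hk : ContinuousOn k (Icc u v))
    (hu : k u ≤ y) (hv : y ≤ k v) : k (lastSublevel k u v y) = y := by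
  have hmem := lastSublevel_mem (k := k) (y := y) huv
  have hle : k (lastSublevel k u v y) ≤ y := by
    have hclosed : IsClosed (insert u (Icc u v ∩ k ⁻¹' Iic y)) :=
      isClosed_singleton.union (hk.preimage_isClosed_of_isClosed isClosed_Icc isClosed_Iic)
    rcases hclosed.csSup_mem (insert_nonempty u _)
      (bddAbove_Icc.mono (insert_inter_subset_Icc huv _)) with heq | hsub
    · exact (congrArg k heq).trans_le hu
    · exact hsub.2
  obtain ⟨x, hx, hxy⟩ := intermediate_value_Icc hmem.2 (hk.mono (Icc_subset_Icc_left hmem.1))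
    ⟨hle, hv⟩
  have hxu : x ∈ Icc u v := ⟨hmem.1.trans hx.1, hx.2⟩
  rwa [le_antisymm (le_lastSublevel hxu hxy.le) hx.1] at hxy

end Sublevel

/-- The inverse branches of the first return map of a unimodal map `h`: the one into `[c, a]`,
where `h` is applied twice, if `s` holds, and the one into `[z, A]` otherwise. -/
noncomputable def invBranch (h : ℝ → ℝ) (z c a A : ℝ) (s : Prop) [Decidable s] (y : ℝ) : ℝ :=
  if s then lastSublevel (h ∘ h) c a y else lastSublevel h z A y

variable {h : ℝ → ℝ} {z w c a A x y y' : ℝ} {s t : Prop} [Decidable s] [Decidable t]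

theorem invBranch_of_true (hs : s) : invBranch h z c a A s y = lastSublevel (h ∘ h) c a y :=
  if_pos hs

theorem invBranch_of_false (hs : ¬s) : invBranch h z c a A s y = lastSublevel h z A y :=
  if_neg hs

theorem le_invBranch_of_true (hs : s) (hx : x ∈ Icc c a) (hxy : h (h x) ≤ y) :
    x ≤ invBranch h z c a A s y := by
  rw [invBranch_of_true hs]
  exact le_lastSublevel hx hxy

theorem le_invBranch_of_false (hs : ¬s) (hx : x ∈ Icc z A) (hxy : h x ≤ y) :
    x ≤ invBranch h z c a A s y := by
  rw [invBranch_of_false hs]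
  exact le_lastSublevel hx hxy

namespace UnimodalMap

theorem invBranch_mem_of_true (H : UnimodalMap h z w c a A) (hs : s) :
    invBranch h z c a A s y ∈ Icc c a := by
  rw [invBranch_of_true hs]
  exact lastSublevel_mem H.a_mem.1.le

theorem invBranch_mem_of_false (H : UnimodalMap h z w c a A) (hs : ¬s) :
    invBranch h z c a A s y ∈ Icc z A := by
  rw [invBranch_of_false hs]
  exact lastSublevel_mem H.A_mem.1.le

theorem invBranch_mem (H : UnimodalMap h z w c a A) : invBranch h z c a A s y ∈ Icc z a := by
  by_cases hs : s
  · exact Icc_subset_Icc_left H.z_lt_c.le (H.invBranch_mem_of_true hs)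
  · exact Icc_subset_Icc_right (H.A_mem.2.trans H.a_mem.1).le (H.invBranch_mem_of_false hs)

theorem invBranch_le_invBranch (H : UnimodalMap h z w c a A) (hst : s → t)
    (hy : (t → s) → y ≤ y') : invBranch h z c a A s y ≤ invBranch h z c a A t y' := by
  by_cases hs : s
  · rw [invBranch_of_true hs, invBranch_of_true (hst hs)]
    exact monotone_lastSublevel _ H.a_mem.1.le (hy fun _ => hs)
  by_cases ht : t
  · exact (H.invBranch_mem_of_false hs).2.trans
      (H.A_mem.2.le.trans (H.invBranch_mem_of_true ht).1)
  · rw [invBranch_of_false hs, invBranch_of_false ht]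
    exact monotone_lastSublevel _ H.A_mem.1.le (hy fun hts => absurd hts ht)

theorem map_invBranch_of_false (H : UnimodalMap h z w c a A) (hs : ¬s)
    (hy : y ∈ Icc z a) : h (invBranch h z c a A s y) = y := by
  rw [invBranch_of_false hs]
  refine apply_lastSublevel H.A_mem.1.le (H.cont.mono (Icc_subset_Icc_right ?_)) ?_ ?_
  · exact (H.A_mem.2.trans H.c_lt_w).le
  · exact H.map_z.trans_le hy.1
  · exact hy.2.trans_eq H.map_A.symm

theorem map_map_invBranch_of_true (H : UnimodalMap h z w c a A) (hs : s)
    (hy : y ∈ Icc (h (h c)) a) : h (h (invBranch h z c a A s y)) = y := by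
  rw [invBranch_of_true hs]
  have hsub : Icc c a ⊆ Icc z w := Icc_subset_Icc H.z_lt_c.le H.a_mem.2
  refine apply_lastSublevel H.a_mem.1.le (H.continuousOn_comp_self.mono hsub) hy.1 ?_
  rw [comp_apply, H.map_a, H.map_a]
  exact hy.2

end UnimodalMap

end InverseBranches

theorem exists_greatest_solution {ι α : Type*} [ConditionallyCompleteLattice α] {z a : α}
    (σ : ι → ι) (Ψ : ι → α → α) (hmono : ∀ i, Monotone (Ψ i))
    (hmem : ∀ i y, Ψ i y ∈ Icc z a) :
    ∃ Y : ι → α, (∀ i, Y i = Ψ i (Y (σ i))) ∧ ∀ (s : Set ι) (X : ι → α), MapsTo σ s s →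
      (∀ i ∈ s, X i ≤ Ψ i (X (σ i))) → ∀ i ∈ s, X i ≤ Y i := by
  classical
  let S : Set (ι → α) := {X | ∀ i, X i ≤ Ψ i (X (σ i))}
  have hne : S.Nonempty := ⟨fun _ => z, fun i => (hmem i _).1⟩
  have hbdd : BddAbove S := ⟨fun _ => a, fun X hX i => (hX i).trans (hmem i _).2⟩
  have hsub (i : ι) : sSup S i ≤ Ψ i (sSup S (σ i)) := by
    suffices sSup S ≤ fun i => Ψ i (sSup S (σ i)) from this i
    exact csSup_le hne fun X hX i => (hX i).trans (hmono i (le_csSup hbdd hX (σ i)))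
  refine ⟨sSup S, fun i => le_antisymm (hsub i) ?_, fun s X hs hX i hi => ?_⟩
  · exact le_csSup hbdd (fun i => hmono i (hsub (σ i)) : (fun i => Ψ i (sSup S (σ i))) ∈ S) i
  · have hext : s.piecewise X (fun _ => z) ∈ S := by
      intro j
      by_cases hj : j ∈ s
      · rw [piecewise_eq_of_mem _ _ _ hj, piecewise_eq_of_mem _ _ _ (hs hj)]
        exact hX j hj
      · rw [piecewise_eq_of_notMem _ _ _ hj]
        exact (hmem j _).1
    rw [← piecewise_eq_of_mem s X (fun _ => z) hi]
    exact le_csSup hbdd hext i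

section Itineraries

theorem forall_of_periodic_of_succ {p : ℕ → Prop} {Q m : ℕ} (hQ : 0 < Q) (hper : Periodic p Q)
    (hsucc : ∀ n, p n → p (n + 1)) (hm : p m) (n : ℕ) : p n := by
  rw [← hper.nat_mul m n]
  have hle : m ≤ n + m * Q := (Nat.le_mul_of_pos_right m hQ).trans (Nat.le_add_left _ _)
  exact Nat.le_induction hm (fun i _ => hsucc i) _ hle

/-- The sequence `v` follows the increasing branches of the first return map of `h`: the one on
`[c, a]` at the times in `s` and the one on `[z, A]` at all other times. -/
structure FollowsBranches (h : ℝ → ℝ) (z c a A : ℝ) (v : ℕ → ℝ) (s : ℕ → Prop) : Prop where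
  left : ∀ n, ¬s n → v n ∈ Icc z A ∧ h (v n) = v (n + 1)
  right : ∀ n, s n → v n ∈ Icc c a ∧ h (h (v n)) = v (n + 1)

variable {h : ℝ → ℝ} {z w c a A : ℝ} {v : ℕ → ℝ} {s : ℕ → Prop} {Q : ℕ}

theorem FollowsBranches.ne_left (hv : FollowsBranches h z c a A v s) (H : UnimodalMap h z w c a A)
    (hQ : 0 < Q) (hper : Periodic v Q) (hs : ∃ m, s m) (n : ℕ) : v n ≠ z := fun hn => by
  have hle {i : ℕ} (hi : s i) : c ≤ v i := (hv.right i hi).1.1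
  obtain ⟨m, hm⟩ := hs
  refine (hle hm).not_gt ?_
  rw [forall_of_periodic_of_succ (p := fun i => v i = z) hQ (fun i => by simp only [hper i]) ?_ hn]
  · exact H.z_lt_c
  · intro i hi
    have hsi : ¬s i := fun hsi => (hle hsi).not_gt (hi ▸ H.z_lt_c)
    rw [← (hv.left i hsi).2, hi, H.map_z]

theorem FollowsBranches.ne_right (hv : FollowsBranches h z c a A v s)
    (H : UnimodalMap h z w c a A) (hQ : 0 < Q) (hper : Periodic v Q) (hs : ∃ l, ¬s l) (n : ℕ) :
    v n ≠ a := fun hn => by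
  have hAa : A < a := H.A_mem.2.trans H.a_mem.1
  have hle {i : ℕ} (hi : ¬s i) : v i ≤ A := (hv.left i hi).1.2
  obtain ⟨l, hl⟩ := hs
  refine (hle hl).not_gt ?_
  rw [forall_of_periodic_of_succ (p := fun i => v i = a) hQ (fun i => by simp only [hper i]) ?_ hn]
  · exact hAa
  · intro i hi
    have hsi : s i := not_not.1 fun hsi => (hle hsi).not_gt (hi ▸ hAa)
    rw [← (hv.right i hsi).2, hi, H.map_a, H.map_a]

theorem FollowsBranches.mem_Icc (hv : FollowsBranches h z c a A v s)
    (H : UnimodalMap h z w c a A) (n : ℕ) : v n ∈ Icc z a := by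
  by_cases hs : s n
  · exact Icc_subset_Icc_left H.z_lt_c.le (hv.right n hs).1
  · exact Icc_subset_Icc_right (H.A_mem.2.trans H.a_mem.1).le (hv.left n hs).1

theorem FollowsBranches.isReturnCycle [DecidablePred s] (hv : FollowsBranches h z c a A v s)
    (H : UnimodalMap h z w c a A) (hper : Periodic v Q) (hpos : 0 < Nat.count s Q)
    (hlt : Nat.count s Q < Q) : IsReturnCycle h z a Q (Nat.count s Q) (v 0) := by
  have hQ : 0 < Q := hpos.trans hlt
  obtain ⟨m, -, hm⟩ := Nat.count_ne_iff_exists.1 hpos.ne'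
  obtain ⟨l, hl⟩ : ∃ l, ¬s l := not_forall.1 fun hall =>
    hlt.ne (Nat.count_iff_forall.2 fun l _ => hall l)
  have hmem (n : ℕ) : v n ∈ Ioo z a :=
    ⟨(hv.mem_Icc H n).1.lt_of_ne' (hv.ne_left H hQ hper ⟨m, hm⟩ n),
      (hv.mem_Icc H n).2.lt_of_ne (hv.ne_right H hQ hper ⟨l, hl⟩ n)⟩
  have hcross (n : ℕ) : a < h (v n) ↔ s n := by
    by_cases hs : s n
    · refine iff_of_true (H.lt_map_of_mem_Ioo ⟨?_, (hmem n).2⟩) hs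
      exact H.A_mem.2.trans_le (hv.right n hs).1.1
    · exact iff_of_false (H.map_le_of_mem_Icc (hv.left n hs).1).not_gt hs
  have hiter (n : ℕ) : (firstReturn h a)^[n] (v 0) = v n := by
    induction n with
    | zero => rfl
    | succ n ih =>
      rw [iterate_succ_apply', ih]
      by_cases hs : s n
      · rw [firstReturn_of_lt ((hcross n).2 hs), (hv.right n hs).2]
      · rw [firstReturn_of_le (not_lt.1 (mt (hcross n).1 hs)), (hv.left n hs).2]
  refine ⟨hQ, (hiter Q).trans hper.eq, fun n => hiter n ▸ hmem n, ?_⟩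
  simp only [crossings, hiter, hcross]

theorem UnimodalMap.isReturnCycle_of_eq_invBranch (H : UnimodalMap h z w c a A) {ι : Type*}
    {σ : ι → ι} {s : ι → Prop} [DecidablePred s] {Y : ι → ℝ}
    (hY : ∀ i, Y i = invBranch h z c a A (s i) (Y (σ i))) {i : ι} (hi : IsPeriodicPt σ Q i)
    (hbottom : ∀ n, h (h c) ≤ Y (σ^[n] i)) (hpos : 0 < Nat.count (fun n => s (σ^[n] i)) Q)
    (hlt : Nat.count (fun n => s (σ^[n] i)) Q < Q) :
    IsReturnCycle h z a Q (Nat.count (fun n => s (σ^[n] i)) Q) (Y i) := by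
  have hmem (j : ι) : Y j ∈ Icc z a := hY j ▸ H.invBranch_mem
  have hfollows : FollowsBranches h z c a A (fun n => Y (σ^[n] i)) (fun n => s (σ^[n] i)) := by
    refine ⟨fun n hn => ?_, fun n hn => ?_⟩
    · rw [iterate_succ_apply', hY (σ^[n] i)]
      exact ⟨H.invBranch_mem_of_false hn, H.map_invBranch_of_false hn (hmem _)⟩
    · have hle := hbottom (n + 1)
      rw [iterate_succ_apply'] at hle ⊢
      rw [hY (σ^[n] i)]
      exact ⟨H.invBranch_mem_of_true hn, H.map_map_invBranch_of_true hn ⟨hle, (hmem _).2⟩⟩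
  exact hfollows.isReturnCycle H (fun n => by simp only [iterate_add_apply, hi.eq]) hpos hlt

end Itineraries

section Rotation

/-- The cyclic permutation `j ↦ j + q` of `{0, …, k + q - 1}`: it is the order pattern of a cycle
of `k + q` returns on which the first return map rotates, the `q` last points being the crossing
ones. -/
def rotStep (k q j : ℕ) : ℕ := if j < k then j + q else j - k

variable {h : ℝ → ℝ} {z w c a A : ℝ} {k q j : ℕ} {Y : ℕ → ℝ}

theorem rotStep_of_lt (hj : j < k) : rotStep k q j = j + q := if_pos hj

theorem rotStep_of_le (hj : k ≤ j) : rotStep k q j = j - k := if_neg hj.not_gt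

theorem iterate_rotStep_lt (hq : 0 < q) (n : ℕ) : (rotStep k q)^[n] 0 < k + q := by
  induction n with
  | zero => exact Nat.add_pos_right k hq
  | succ n ih =>
    rw [iterate_succ_apply', rotStep]
    split_ifs <;> omega

theorem mul_eq_add_iterate_rotStep (k q n : ℕ) :
    n * q = (k + q) * Nat.count (fun i => k ≤ (rotStep k q)^[i] 0) n + (rotStep k q)^[n] 0 := by
  induction n with
  | zero => simp
  | succ n ih =>
    rw [Nat.count_succ, iterate_succ_apply', Nat.succ_mul, ih]
    split_ifs with hj
    · rw [rotStep_of_le hj, Nat.mul_succ]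
      omega
    · rw [rotStep_of_lt (not_le.1 hj), add_zero]
      omega

theorem isPeriodicPt_rotStep (hq : 0 < q) : IsPeriodicPt (rotStep k q) (k + q) 0 := by
  refine Nat.eq_zero_of_dvd_of_lt ?_ (iterate_rotStep_lt hq (k + q))
  exact (Nat.dvd_add_right (Nat.dvd_mul_right _ _)).1
    (mul_eq_add_iterate_rotStep k q (k + q) ▸ Nat.dvd_mul_right _ _)

theorem count_rotStep (hq : 0 < q) :
    Nat.count (fun i => k ≤ (rotStep k q)^[i] 0) (k + q) = q := by
  have hmul := mul_eq_add_iterate_rotStep k q (k + q)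
  rw [isPeriodicPt_rotStep hq, add_zero] at hmul
  exact (Nat.eq_of_mul_eq_mul_left (Nat.add_pos_right k hq) hmul).symm

/-- A monotone solution of the inverse-branch equations of a rotation of `k + q` returns with `q`
crossings. It need not be a cycle of `h`, as the inverse branches are only generalized inverses
below `h (h c)`. -/
structure RotationSolution (h : ℝ → ℝ) (z c a A : ℝ) (k q : ℕ) (Y : ℕ → ℝ) : Prop where
  monotone : Monotone Y
  eq_invBranch : ∀ j, Y j = invBranch h z c a A (k ≤ j) (Y (rotStep k q j))

theorem UnimodalMap.exists_rotationSolution (H : UnimodalMap h z w c a A) (k q : ℕ) :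
    ∃ Y, RotationSolution h z c a A k q Y := by
  obtain ⟨Y, hY, hgreatest⟩ := exists_greatest_solution (rotStep k q)
    (fun j => invBranch h z c a A (k ≤ j))
    (fun _ _ _ hyy' => H.invBranch_le_invBranch id fun _ => hyy') (fun _ _ => H.invBranch_mem)
  refine ⟨Y, fun i j hij => (le_partialSups_of_le Y hij).trans ?_, hY⟩
  refine hgreatest univ (partialSups Y) (mapsTo_univ _ _) (fun j _ => ?_) j (mem_univ j)
  obtain ⟨i, hij, hi⟩ := exists_partialSups_eq Y j
  rw [hi, hY i]
  refine H.invBranch_le_invBranch (fun hki => hki.trans hij) fun himp => ?_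
  refine (le_partialSups Y _).trans ((partialSups Y).monotone ?_)
  unfold rotStep
  split_ifs <;> omega

namespace RotationSolution

theorem mem (hY : RotationSolution h z c a A k q Y) (H : UnimodalMap h z w c a A) (j : ℕ) :
    Y j ∈ Icc z a :=
  hY.eq_invBranch j ▸ H.invBranch_mem

theorem c_le (hY : RotationSolution h z c a A k q Y) (H : UnimodalMap h z w c a A)
    (hj : k ≤ j) : c ≤ Y j :=
  hY.eq_invBranch j ▸ (H.invBranch_mem_of_true hj).1

theorem map_eq (hY : RotationSolution h z c a A k q Y) (H : UnimodalMap h z w c a A)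
    (hj : j < k) : h (Y j) = Y (j + q) := by
  rw [hY.eq_invBranch j, H.map_invBranch_of_false hj.not_ge (hY.mem H _), rotStep_of_lt hj]

theorem le_map_map (hY : RotationSolution h z c a A k q Y) (H : UnimodalMap h z w c a A) (j : ℕ) :
    Y j ≤ h (h (Y (j + k))) := by
  have hkj : k ≤ j + k := Nat.le_add_left k j
  rcases le_or_gt (h (h c)) (Y j) with hle | hlt
  · rw [hY.eq_invBranch (j + k), rotStep_of_le hkj, Nat.add_sub_cancel,
      H.map_map_invBranch_of_true hkj ⟨hle, (hY.mem H j).2⟩]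
  · refine hlt.le.trans (H.monotoneOn_comp_self ⟨le_rfl, H.a_mem.1.le⟩ ?_ (hY.c_le H hkj))
    exact ⟨hY.c_le H hkj, (hY.mem H _).2⟩

theorem isReturnCycle (hY : RotationSolution h z c a A k q Y) (H : UnimodalMap h z w c a A)
    (hk : 0 < k) (hq : 0 < q) (hbottom : h (h c) ≤ Y 0) :
    IsReturnCycle h z a (k + q) q (Y 0) := by
  have hcount := count_rotStep (k := k) hq
  have hcycle := H.isReturnCycle_of_eq_invBranch hY.eq_invBranch (isPeriodicPt_rotStep hq)
    (fun n => hbottom.trans (hY.monotone (Nat.zero_le _))) (by rwa [hcount])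
    (by rw [hcount]; exact Nat.lt_add_of_pos_left hk)
  rwa [hcount] at hcycle

end RotationSolution

end Rotation

section Comparison

/-- Two unimodal maps with the same turning point and the same fixed point, such that on both
increasing branches the first return map of `h` lies below the one of `g`. -/
structure Slower (h g : ℝ → ℝ) (z w z₀ w₀ c a A B : ℝ) : Prop where
  left : UnimodalMap h z w c a A
  right : UnimodalMap g z₀ w₀ c a B
  B_le_A : B ≤ A
  map_le_map : ∀ x ∈ Icc z B, h x ≤ g x
  map_map_le_map_map : ∀ x ∈ Icc c a, h (h x) ≤ g (g x)

variable {h g : ℝ → ℝ} {z w z₀ w₀ c a A B x : ℝ} {k q Q : ℕ}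

theorem Slower.of_monotoneOn_sub (Hh : UnimodalMap h z w c a A) (Hg : UnimodalMap g z₀ w₀ c a B)
    (hBA : B ≤ A) (hmono : MonotoneOn (h - g) (Icc z c)) (hanti : AntitoneOn (h - g) (Icc c w)) :
    Slower h g z w z₀ w₀ c a A B := by
  refine ⟨Hh, Hg, hBA, fun x hx => ?_, fun x hx => ?_⟩
  · have hzB : z ≤ B := hx.1.trans hx.2
    have hBc : B ≤ c := hBA.trans Hh.A_mem.2.le
    have hsub : h x - g x ≤ h B - g B := hmono ⟨hx.1, hx.2.trans hBc⟩ ⟨hzB, hBc⟩ hx.2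
    have hB : h B ≤ g B := Hg.map_A.symm ▸ Hh.map_le_of_mem_Icc ⟨hzB, hBA⟩
    linarith
  · have ha : a ∈ Icc c w := Ioc_subset_Icc_self Hh.a_mem
    have hax : h a - g a ≤ h x - g x := hanti ⟨hx.1, hx.2.trans ha.2⟩ ha hx.2
    have hgh : g x ≤ h x := by linarith [Hh.map_a, Hg.map_a]
    have hhx := Hh.map_mem_of_mem_Icc hx
    have hagx : a ≤ g x := (Hg.map_mem_of_mem_Icc hx).1
    have hgxw : g x ∈ Icc c w := ⟨ha.1.trans hagx, hgh.trans hhx.2⟩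
    have hgga : h (g x) - g (g x) ≤ h a - g a := hanti ha hgxw hagx
    have hhhg : h (h x) ≤ h (g x) := Hh.anti.antitoneOn hgxw ⟨ha.1.trans hhx.1, hhx.2⟩ hgh
    linarith [Hh.map_a, Hg.map_a]

theorem Slower.map_map_c_le (S : Slower h g z w z₀ w₀ c a A B) (hx : x ∈ Icc z₀ w₀)
    (hgx : a ≤ g x) : h (h c) ≤ g (g x) :=
  have hgc : g c ∈ Icc z₀ w₀ := S.right.maps S.right.c_mem
  have hxc : g x ≤ g c := S.right.map_le_map_c hx
  have hcx : c ≤ g x := S.right.a_mem.1.le.trans hgx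
  (S.map_map_le_map_map c ⟨le_rfl, S.right.a_mem.1.le⟩).trans
    (S.right.anti.antitoneOn ⟨hcx, hxc.trans hgc.2⟩ ⟨hcx.trans hxc, hgc.2⟩ hxc)

theorem IsReturnCycle.periodic (hx : IsReturnCycle g z₀ a Q q x) :
    Periodic (fun n => (firstReturn g a)^[n] x) Q := fun n => by
  simp only [iterate_add_apply, hx.isPeriodicPt.eq]

theorem IsReturnCycle.mem_Icc (hx : IsReturnCycle g z₀ a Q q x) (Hg : UnimodalMap g z₀ w₀ c a B)
    (n : ℕ) : (firstReturn g a)^[n] x ∈ Icc z₀ w₀ :=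
  ⟨(hx.mem n).1.le, (hx.mem n).2.le.trans Hg.a_mem.2⟩

theorem Slower.map_map_c_le_iterate (S : Slower h g z w z₀ w₀ c a A B)
    (hx : IsReturnCycle g z₀ a Q q x) (n : ℕ) : h (h c) ≤ (firstReturn g a)^[n] x := by
  have hbottom {m : ℕ} (hm : a < g ((firstReturn g a)^[m] x)) :
      h (h c) ≤ (firstReturn g a)^[m + 1] x := by
    rw [iterate_succ_apply', firstReturn_of_lt hm]
    exact S.map_map_c_le (hx.mem_Icc S.right m) hm.le
  obtain ⟨m, -, hm, -⟩ := hx.exists_crossing_le fun _ => S.right.lt_map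
  refine forall_of_periodic_of_succ (p := fun n => h (h c) ≤ (firstReturn g a)^[n] x) hx.pos
    (hx.periodic.comp _) (fun n hn => ?_) (hbottom hm) n
  rcases le_or_gt (g ((firstReturn g a)^[n] x)) a with hle | hgt
  · rw [iterate_succ_apply', firstReturn_of_le hle]
    exact hn.trans (S.right.lt_map (hx.mem n)).le
  · exact hbottom hgt

theorem Slower.le_invBranch_firstReturn (S : Slower h g z w z₀ w₀ c a A B) (hx : x ∈ Ico z a)
    (hc : a < g x → c ≤ x) : x ≤ invBranch h z c a A (a < g x) (firstReturn g a x) := by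
  rcases le_or_gt (g x) a with hle | hgt
  · have hxB : x ≤ B := S.right.le_of_map_le hx.2 hle
    refine le_invBranch_of_false hle.not_gt ⟨hx.1, hxB.trans S.B_le_A⟩ ?_
    rw [firstReturn_of_le hle]
    exact S.map_le_map x ⟨hx.1, hxB⟩
  · refine le_invBranch_of_true hgt ⟨hc hgt, hx.2.le⟩ ?_
    rw [firstReturn_of_lt hgt]
    exact S.map_map_le_map_map x ⟨hc hgt, hx.2.le⟩

theorem Slower.exists_isReturnCycle_of_forall_c_le (S : Slower h g z w z₀ w₀ c a A B)
    (hx : IsReturnCycle g z₀ a Q q x) (hqQ : q < Q)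
    (hc : ∀ n < Q, a < g ((firstReturn g a)^[n] x) → c ≤ (firstReturn g a)^[n] x) :
    ∃ y, IsReturnCycle h z a Q q y := by
  obtain ⟨Y, hY, hgreatest⟩ := exists_greatest_solution (firstReturn g a)
    (fun v => invBranch h z c a A (a < g v))
    (fun _ _ _ hyy' => S.left.invBranch_le_invBranch id fun _ => hyy')
    (fun _ _ => S.left.invBranch_mem)
  have hmaps : MapsTo (firstReturn g a) (range fun n => (firstReturn g a)^[n] x)
      (range fun n => (firstReturn g a)^[n] x) := by
    rintro _ ⟨n, rfl⟩
    exact ⟨n + 1, iterate_succ_apply' _ _ _⟩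
  have hsub : ∀ v ∈ range fun n => (firstReturn g a)^[n] x,
      v ≤ invBranch h z c a A (a < g v) (firstReturn g a v) := by
    rintro _ ⟨n, rfl⟩
    have hz : z ≤ (firstReturn g a)^[n] x :=
      S.left.map_map_c_mem.1.trans (S.map_map_c_le_iterate hx n)
    refine S.le_invBranch_firstReturn ⟨hz, (hx.mem n).2⟩ fun hcross => ?_
    have hcn := hc (n % Q) (Nat.mod_lt n hx.pos)
    rw [hx.isPeriodicPt.iterate_mod_apply n] at hcn
    exact hcn hcross
  have hpos : 0 < q := hx.crossings_pos fun _ => S.right.lt_map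
  obtain rfl : crossings g a x Q = q := hx.crossings_eq
  exact ⟨Y x, S.left.isReturnCycle_of_eq_invBranch hY hx.isPeriodicPt
    (fun n => (S.map_map_c_le_iterate hx n).trans (hgreatest _ id hmaps hsub _ ⟨n, rfl⟩))
    hpos hqQ⟩

end Comparison

section Rank

theorem lt_count_iff_of_antitone {p : ℕ → Prop} [DecidablePred p] (hp : Antitone p) (i n : ℕ) :
    i < Nat.count p n ↔ i < n ∧ p i := by
  induction n with
  | zero => simp
  | succ n ih =>
    rw [Nat.count_succ]
    split_ifs with hn
    · rw [Nat.count_iff_forall.2 fun j hj => hp hj.le hn]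
      exact ⟨fun hi => ⟨hi, hp (Nat.le_of_lt_succ hi) hn⟩, And.left⟩
    · rw [add_zero, ih, and_congr_left_iff]
      exact fun hi => ⟨Nat.lt_succ_of_lt, fun hin =>
        (Nat.lt_succ_iff_lt_or_eq.1 hin).resolve_right fun heq => hn (heq ▸ hi)⟩

theorem add_eq_of_add_le_of_count_eq {u : ℕ → ℕ} {s : ℕ → Prop} [DecidablePred s] {N q : ℕ}
    (hu : u N = u 0) (hcount : Nat.count s N = q)
    (hle : ∀ n < N, u n + q ≤ u (n + 1) + if s n then N else 0) :
    ∀ n < N, u n + q = u (n + 1) + if s n then N else 0 := by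
  have hshift : ∑ n ∈ Finset.range N, u (n + 1) = ∑ n ∈ Finset.range N, u n := by
    have hsplit := (Finset.sum_range_succ' u N).symm.trans (Finset.sum_range_succ u N)
    rw [hu] at hsplit
    exact Nat.add_right_cancel hsplit
  have hsum : ∑ n ∈ Finset.range N, (u n + q) =
      ∑ n ∈ Finset.range N, (u (n + 1) + if s n then N else 0) := by
    rw [Finset.sum_add_distrib, Finset.sum_add_distrib, hshift, ← Finset.sum_filter,
      Finset.sum_const, Finset.sum_const, ← Nat.count_eq_card_filter_range, hcount,
      Finset.card_range, smul_eq_mul, smul_eq_mul, mul_comm]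
  simpa only [Finset.mem_range] using (Finset.sum_eq_sum_iff_of_le fun n hn =>
    hle n (Finset.mem_range.1 hn)).1 hsum

/-- The number of `Y 0, …, Y (N - 1)` that are at most `x`. -/
noncomputable def rank (Y : ℕ → ℝ) (N : ℕ) (x : ℝ) : ℕ :=
  Nat.count (fun j => Y j ≤ x) N

variable {h g : ℝ → ℝ} {z w z₀ w₀ c a A B x : ℝ} {Y : ℕ → ℝ} {i j k q N : ℕ}

theorem lt_rank_iff (hY : Monotone Y) : j < rank Y N x ↔ j < N ∧ Y j ≤ x :=
  lt_count_iff_of_antitone (fun _ _ hij hx => (hY hij).trans hx) j N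

theorem rank_le_of_lt (hY : Monotone Y) (hx : x < Y j) : rank Y N x ≤ j :=
  not_lt.1 fun hj => ((lt_rank_iff hY).1 hj).2.not_gt hx

namespace Slower

theorem rank_add_le_rank_map (S : Slower h g z w z₀ w₀ c a A B)
    (hY : RotationSolution h z c a A k q Y) (hpos : 0 < rank Y (k + q) x) (hx : x ∈ Icc z B) :
    rank Y (k + q) x + q ≤ rank Y (k + q) (g x) := by
  have hBc : B < c := S.B_le_A.trans_lt S.left.A_mem.2
  have hrk : rank Y (k + q) x ≤ k :=
    rank_le_of_lt hY.monotone ((hx.2.trans_lt hBc).trans_le (hY.c_le S.left le_rfl))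
  obtain ⟨r, hr⟩ := Nat.exists_eq_add_one_of_ne_zero hpos.ne'
  have hYr : Y r ≤ x := ((lt_rank_iff hY.monotone).1 (by omega : r < rank Y (k + q) x)).2
  have hxc : x ≤ c := hx.2.trans hBc.le
  have hYg : Y (r + q) ≤ g x := calc
    Y (r + q) = h (Y r) := (hY.map_eq S.left (by omega)).symm
    _ ≤ h x := S.left.mono.monotoneOn ⟨(hY.mem S.left r).1, hYr.trans hxc⟩ ⟨hx.1, hxc⟩ hYr
    _ ≤ g x := S.map_le_map x hx
  have := (lt_rank_iff hY.monotone).2 ⟨(by omega : r + q < k + q), hYg⟩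
  omega

theorem rank_le_rank_map_map_add (S : Slower h g z w z₀ w₀ c a A B)
    (hY : RotationSolution h z c a A k q Y) (hx : x ∈ Icc c a) :
    rank Y (k + q) x ≤ rank Y (k + q) (g (g x)) + k := by
  by_contra! hlt
  set r := rank Y (k + q) (g (g x))
  obtain ⟨hrN, hYx⟩ := (lt_rank_iff hY.monotone).1 hlt
  have hYc : c ≤ Y (r + k) := hY.c_le S.left (Nat.le_add_left k r)
  have hYg : Y r ≤ g (g x) := calc
    Y r ≤ h (h (Y (r + k))) := hY.le_map_map S.left r
    _ ≤ h (h x) := S.left.monotoneOn_comp_self ⟨hYc, hYx.trans hx.2⟩ hx hYx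
    _ ≤ g (g x) := S.map_map_le_map_map x hx
  have := (lt_rank_iff hY.monotone).2 ⟨(by omega : r < k + q), hYg⟩
  omega

theorem c_le_of_rotationSolution (S : Slower h g z w z₀ w₀ c a A B)
    (hY : RotationSolution h z c a A k q Y) (hY0 : Y 0 < h (h c))
    (hx : IsReturnCycle g z₀ a (k + q) q x) :
    ∀ n < k + q, a < g ((firstReturn g a)^[n] x) → c ≤ (firstReturn g a)^[n] x := by
  set u : ℕ → ℕ := fun n => rank Y (k + q) ((firstReturn g a)^[n] x)
  have hpos (n : ℕ) : 0 < u n :=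
    (lt_rank_iff hY.monotone).2 ⟨hx.pos, hY0.le.trans (S.map_map_c_le_iterate hx n)⟩
  have hlow {n : ℕ} (hn : (firstReturn g a)^[n] x < c) : u n ≤ k :=
    rank_le_of_lt hY.monotone (hn.trans_le (hY.c_le S.left le_rfl))
  have hdrift := add_eq_of_add_le_of_count_eq (u := u)
    (congrArg (rank Y (k + q)) hx.isPeriodicPt.eq) hx.crossings_eq fun n _ => ?_
  · intro n hn hcross
    by_contra! hnc
    have heq := hdrift n hn
    rw [if_pos hcross] at heq
    have := hpos (n + 1)
    have := hlow hnc
    omega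
  · split_ifs with hcross
    · rcases lt_or_ge ((firstReturn g a)^[n] x) c with hnc | hcn
      · have := hlow hnc
        have := hpos (n + 1)
        omega
      · have hle := S.rank_le_rank_map_map_add hY ⟨hcn, (hx.mem n).2.le⟩
        rw [← firstReturn_of_lt hcross, ← iterate_succ_apply' (firstReturn g a)] at hle
        change u n ≤ u (n + 1) + k at hle
        omega
    · have hle := not_lt.1 hcross
      have hz := S.left.map_map_c_mem.1.trans (S.map_map_c_le_iterate hx n)
      have hstep := S.rank_add_le_rank_map hY (hpos n)
        ⟨hz, S.right.le_of_map_le (hx.mem n).2 hle⟩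
      rwa [← firstReturn_of_le hle, ← iterate_succ_apply' (firstReturn g a)] at hstep

end Slower

end Rank

section CycleForcing

variable {h g : ℝ → ℝ} {z w z₀ w₀ c a A B x : ℝ} {q Q : ℕ}

theorem UnimodalMap.isReturnCycle_of_map_map_eq (H : UnimodalMap h z w c a A) (hx : x ∈ Ioo A a)
    (hfix : h (h x) = x) (hQ : 0 < Q) : IsReturnCycle h z a Q Q x := by
  have hcross : a < h x := H.lt_map_of_mem_Ioo hx
  have hreturn (n : ℕ) : (firstReturn h a)^[n] x = x :=
    iterate_fixed ((firstReturn_of_lt hcross).trans hfix) n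
  refine ⟨hQ, hreturn Q, fun n => ?_, ?_⟩
  · rw [hreturn]
    exact ⟨H.A_mem.1.trans hx.1, hx.2⟩
  · exact Nat.count_iff_forall.2 fun n _ => by rwa [hreturn]

theorem Slower.exists_map_map_eq (S : Slower h g z w z₀ w₀ c a A B) (hx : x ∈ Ioo z₀ a)
    (hgx : a < g x) (hggx : g (g x) ≤ x) : ∃ y ∈ Ioo A a, h (h y) = y := by
  obtain ⟨e, he, hhe⟩ : ∃ e ∈ Ico c a, h (h e) ≤ e := by
    rcases le_total c x with hcx | hxc
    · exact ⟨x, ⟨hcx, hx.2⟩, (S.map_map_le_map_map x ⟨hcx, hx.2.le⟩).trans hggx⟩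
    · have hxw : x ≤ w₀ := hx.2.le.trans S.right.a_mem.2
      exact ⟨c, ⟨le_rfl, S.right.a_mem.1⟩,
        (S.map_map_c_le ⟨hx.1.le, hxw⟩ hgx.le).trans (hggx.trans hxc)⟩
  have hAe : A < e := S.left.A_mem.2.trans_le he.1
  have hA : h (h A) = a := by rw [S.left.map_A, S.left.map_a]
  have hsub : Icc A e ⊆ Icc z w :=
    Icc_subset_Icc S.left.A_mem.1.le (he.2.le.trans S.left.a_mem.2)
  obtain ⟨y, hy, hfix⟩ := exists_mem_Icc_isFixedPt (S.left.continuousOn_comp_self.mono hsub)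
    hAe.le ((hAe.trans he.2).le.trans_eq hA.symm) hhe
  refine ⟨y, ⟨hy.1.lt_of_ne ?_, hy.2.trans_lt he.2⟩, hfix⟩
  rintro rfl
  exact (hAe.trans he.2).ne (hfix.symm.trans hA)

theorem Slower.exists_isReturnCycle (S : Slower h g z w z₀ w₀ c a A B)
    (hx : IsReturnCycle g z₀ a Q q x) : ∃ y, IsReturnCycle h z a Q q y := by
  have hq : 0 < q := hx.crossings_pos fun _ => S.right.lt_map
  have hqQ : q ≤ Q := hx.crossings_eq ▸ Nat.count_le _
  rcases hqQ.eq_or_lt with rfl | hlt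
  · obtain ⟨n, -, hcross, hle⟩ := hx.exists_crossing_le fun _ => S.right.lt_map
    obtain ⟨y, hy, hfix⟩ := S.exists_map_map_eq (hx.mem n) hcross hle
    exact ⟨y, S.left.isReturnCycle_of_map_map_eq hy hfix hx.pos⟩
  · obtain ⟨k, rfl⟩ := Nat.exists_eq_add_of_le' hqQ
    obtain ⟨Y, hY⟩ := S.left.exists_rotationSolution k q
    rcases le_or_gt (h (h c)) (Y 0) with hle | hY0
    · exact ⟨Y 0, hY.isReturnCycle S.left (Nat.pos_of_lt_add_left hlt) hq hle⟩
    · exact S.exists_isReturnCycle_of_forall_c_le hx hlt (S.c_le_of_rotationSolution hY hY0 hx)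

theorem Slower.overRotInterval_subset (S : Slower h g z w z₀ w₀ c a A B) :
    overRotInterval g (Icc z₀ w₀) ⊆ overRotInterval h (Icc z w) := by
  refine closure_mono ?_
  rintro _ ⟨y, hy, hper, hne, rfl⟩
  obtain ⟨x, Q, q, hx, hρ⟩ := S.right.exists_isReturnCycle hy hper hne
  obtain ⟨v, hv⟩ := S.exists_isReturnCycle hx
  refine ⟨v, hv.mem_Icc S.left 0, ⟨Q + q, Nat.add_pos_left hv.pos q, hv.isPeriodicPt_add⟩,
    (S.left.lt_map (hv.mem 0)).ne', ?_⟩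
  rw [hv.overRotNum_eq fun _ => S.left.lt_map, ← hρ, hx.overRotNum_eq fun _ => S.right.lt_map]

end CycleForcing

section Homothety

/-- The homothety `x ↦ c + l * (x - c)` of the real line, as an order isomorphism. -/
noncomputable def homothety (c : ℝ) {l : ℝ} (hl : 0 < l) : ℝ ≃o ℝ :=
  ((OrderIso.addRight (-c)).trans (OrderIso.mulLeft₀ l hl)).trans (OrderIso.addLeft c)

theorem homothety_apply (c : ℝ) {l : ℝ} (hl : 0 < l) (x : ℝ) :
    homothety c hl x = c + l * (x - c) := by
  simp [homothety, sub_eq_add_neg]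

theorem slope_le_slope_of_concaveOn {𝕜 : Type*} [Field 𝕜] [LinearOrder 𝕜]
    [IsStrictOrderedRing 𝕜] {f : 𝕜 → 𝕜} {s : Set 𝕜} {x y u v : 𝕜} (hf : ConcaveOn 𝕜 s f)
    (hx : x ∈ s) (hv : v ∈ s) (hxy : x < y) (huv : u < v) (hxu : x ≤ u) (hyv : y ≤ v) :
    slope f u v ≤ slope f x y := by
  have hxv : x < v := hxy.trans_le hyv
  have hI : Icc x v ⊆ s := hf.1.ordConnected.out hx hv
  calc
    slope f u v = slope f v u := slope_comm f u v
    _ ≤ slope f v x := hf.slope_anti hv ⟨hx, hxv.ne⟩ ⟨hI ⟨hxu, huv.le⟩, huv.ne⟩ hxu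
    _ = slope f x v := slope_comm f v x
    _ ≤ slope f x y := hf.slope_anti hx ⟨hI ⟨hxy.le, hyv⟩, hxy.ne'⟩ ⟨hv, hxv.ne'⟩ hyv

variable {f : ℝ → ℝ} {z w c l : ℝ}

theorem slope_conj_homothety (hl : 0 < l) (u v : ℝ) :
    slope ((homothety c hl).toEquiv.conj f) (homothety c hl u) (homothety c hl v) =
      slope f u v := by
  have hv : homothety c hl v - homothety c hl u = l * (v - u) := by
    simp only [homothety_apply]
    ring
  have hfv : homothety c hl (f v) - homothety c hl (f u) = l * (f v - f u) := by
    simp only [homothety_apply]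
    ring
  simp [slope_def_field, hv, hfv, mul_div_mul_left _ _ hl.ne']

theorem antitoneOn_conj_homothety_sub (hf : ConcaveOn ℝ (Icc z w) f) (hc : c ∈ Icc z w)
    (hl : 0 < l) (hl1 : l ≤ 1) :
    AntitoneOn ((homothety c hl).toEquiv.conj f - f) (Icc c (homothety c hl w)) := by
  intro x hx y hy hxy
  rcases hxy.eq_or_lt with rfl | hlt
  · exact le_rfl
  obtain ⟨u, rfl⟩ := (homothety c hl).surjective x
  obtain ⟨v, rfl⟩ := (homothety c hl).surjective y
  have huv : u < v := (homothety c hl).lt_iff_lt.1 hlt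
  have hvw : v ≤ w := (homothety c hl).le_iff_le.1 hy.2
  have hshrink {t : ℝ} (ht : c ≤ homothety c hl t) : homothety c hl t ≤ t := by
    rw [homothety_apply] at ht ⊢
    nlinarith
  have hslope := slope_le_slope_of_concaveOn hf ⟨hc.1.trans hx.1, hlt.le.trans
    ((hshrink hy.1).trans hvw)⟩ ⟨(hc.1.trans hy.1).trans (hshrink hy.1), hvw⟩ hlt huv
    (hshrink hx.1) (hshrink hy.1)
  rw [← slope_conj_homothety (c := c) hl, slope_def_field, slope_def_field,
    div_le_div_iff_of_pos_right (sub_pos.2 hlt)] at hslope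
  simp only [Pi.sub_apply]
  linarith

theorem monotoneOn_conj_homothety_sub (hf : ConcaveOn ℝ (Icc z w) f) (hc : c ∈ Icc z w)
    (hl : 0 < l) (hl1 : l ≤ 1) :
    MonotoneOn ((homothety c hl).toEquiv.conj f - f) (Icc (homothety c hl z) c) := by
  intro x hx y hy hxy
  rcases hxy.eq_or_lt with rfl | hlt
  · exact le_rfl
  obtain ⟨u, rfl⟩ := (homothety c hl).surjective x
  obtain ⟨v, rfl⟩ := (homothety c hl).surjective y
  have huv : u < v := (homothety c hl).lt_iff_lt.1 hlt
  have hzu : z ≤ u := (homothety c hl).le_iff_le.1 hx.1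
  have hshrink {t : ℝ} (ht : homothety c hl t ≤ c) : t ≤ homothety c hl t := by
    rw [homothety_apply] at ht ⊢
    nlinarith
  have hslope := slope_le_slope_of_concaveOn hf ⟨hzu, (hshrink hx.2).trans (hx.2.trans hc.2)⟩
    ⟨hzu.trans ((hshrink hx.2).trans hlt.le), hy.2.trans hc.2⟩ huv hlt (hshrink hx.2)
    (hshrink hy.2)
  rw [← slope_conj_homothety (c := c) hl u, slope_def_field, slope_def_field,
    div_le_div_iff_of_pos_right (sub_pos.2 hlt)] at hslope
  simp only [Pi.sub_apply]
  linarith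

end Homothety

section Concave

variable {f g : ℝ → ℝ} {z w c af af' ag ag' l : ℝ}

theorem slower_conj_homothety (Uf : UnimodalMap f z w c af af') (Ug : UnimodalMap g z w c ag ag')
    (hf : ConcaveOn ℝ (Icc z w) f) (hmono : MonotoneOn (f - g) (Icc z c))
    (hanti : AntitoneOn (f - g) (Icc c w)) (hl : 0 < l) (hl1 : l ≤ 1)
    (ha : homothety c hl af = ag) (hA : ag' ≤ homothety c hl af') :
    Slower ((homothety c hl).toEquiv.conj f) g (homothety c hl z) (homothety c hl w) z w c ag
      (homothety c hl af') ag' := by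
  have hc : homothety c hl c = c := by rw [homothety_apply, sub_self, mul_zero, add_zero]
  have hz : z ≤ homothety c hl z := by
    rw [homothety_apply]
    nlinarith [Uf.z_lt_c]
  have hw : homothety c hl w ≤ w := by
    rw [homothety_apply]
    nlinarith [Uf.c_lt_w]
  have Uh := Uf.conj (homothety c hl)
  rw [hc, ha] at Uh
  refine .of_monotoneOn_sub Uh Ug hA ?_ ?_
  · rw [← sub_add_sub_cancel _ f g]
    exact (monotoneOn_conj_homothety_sub hf Uf.c_mem hl hl1).add
      (hmono.mono (Icc_subset_Icc_left hz))
  · rw [← sub_add_sub_cancel _ f g]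
    exact (antitoneOn_conj_homothety_sub hf Uf.c_mem hl hl1).add
      (hanti.mono (Icc_subset_Icc_right hw))

theorem UnimodalMap.le_of_antitoneOn_sub (Uf : UnimodalMap f z w c af af')
    (Ug : UnimodalMap g z w c ag ag') (hanti : AntitoneOn (f - g) (Icc c w)) (hw : g w ≤ f w) :
    ag ≤ af := by
  have hag : ag ∈ Icc c w := Ioc_subset_Icc_self Ug.a_mem
  by_contra! hlt
  have hfag : f ag < af := Uf.map_lt_of_mem_Ioc ⟨hlt, hag.2⟩
  have hsub : f w - g w ≤ f ag - g ag := hanti hag ⟨hag.1.trans hag.2, le_rfl⟩ hag.2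
  linarith [Ug.map_a]

theorem stmt9_general (Uf : UnimodalMap f z w c af af') (Ug : UnimodalMap g z w c ag ag')
    (hf : ConcaveOn ℝ (Icc z w) f) (hmono : MonotoneOn (f - g) (Icc z c))
    (hanti : AntitoneOn (f - g) (Icc c w)) (hw : g w ≤ f w)
    (hratio : |c - ag| / |c - ag'| ≤ |c - af| / |c - af'|) :
    overRotInterval g (Icc z w) ⊆ overRotInterval f (Icc z w) := by
  have hcf : 0 < af - c := sub_pos.2 Uf.a_mem.1
  have hcg : 0 < ag - c := sub_pos.2 Ug.a_mem.1
  have hcf' : 0 < c - af' := sub_pos.2 Uf.A_mem.2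
  have hcg' : 0 < c - ag' := sub_pos.2 Ug.A_mem.2
  have hl : 0 < (ag - c) / (af - c) := div_pos hcg hcf
  have hl1 : (ag - c) / (af - c) ≤ 1 :=
    (div_le_one hcf).2 (sub_le_sub_right (Uf.le_of_antitoneOn_sub Ug hanti hw) c)
  have ha : homothety c hl af = ag := by
    rw [homothety_apply, div_mul_cancel₀ _ hcf.ne', add_sub_cancel]
  have hA : ag' ≤ homothety c hl af' := by
    rw [abs_sub_comm c ag, abs_sub_comm c af, abs_of_pos hcg, abs_of_pos hcf, abs_of_pos hcg',
      abs_of_pos hcf', div_le_div_iff₀ hcg' hcf'] at hratio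
    have hscale : (ag - c) / (af - c) * (c - af') ≤ c - ag' := by
      rwa [div_mul_eq_mul_div, div_le_iff₀ hcf, mul_comm (c - ag')]
    rw [homothety_apply]
    linarith
  have S := slower_conj_homothety Uf Ug hf hmono hanti hl hl1 ha hA
  refine S.overRotInterval_subset.trans ?_
  rw [← OrderIso.image_Icc]
  exact overRotInterval_conj_image_subset _ _

end Concave

section Derivative

variable {f g : ℝ → ℝ} {u v : ℝ}

theorem monotoneOn_sub_of_abs_deriv_le (hf : ContDiffOn ℝ 1 f (Icc u v))
    (hg : ContDiffOn ℝ 1 g (Icc u v)) (hmono : MonotoneOn f (Icc u v))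
    (hderiv : ∀ x ∈ Ioo u v, |deriv g x| ≤ |deriv f x|) : MonotoneOn (f - g) (Icc u v) := by
  have hdiff {k : ℝ → ℝ} (hk : ContDiffOn ℝ 1 k (Icc u v)) {x : ℝ} (hx : x ∈ Ioo u v) :
      DifferentiableAt ℝ k x :=
    (hk.differentiableOn one_ne_zero).differentiableAt (Icc_mem_nhds hx.1 hx.2)
  refine monotoneOn_of_deriv_nonneg (convex_Icc u v) (hf.continuousOn.sub hg.continuousOn) ?_ ?_
    <;> rw [interior_Icc]
  · exact fun x hx => ((hdiff hf hx).sub (hdiff hg hx)).differentiableWithinAt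
  · intro x hx
    have hfx : 0 ≤ deriv f x := by
      rw [← derivWithin_of_mem_nhds (Icc_mem_nhds hx.1 hx.2)]
      exact hmono.derivWithin_nonneg
    have hgf := (le_abs_self _).trans (hderiv x hx)
    rw [abs_of_nonneg hfx] at hgf
    rw [deriv_sub (hdiff hf hx) (hdiff hg hx)]
    exact sub_nonneg.2 hgf

theorem antitoneOn_sub_of_abs_deriv_le (hf : ContDiffOn ℝ 1 f (Icc u v))
    (hg : ContDiffOn ℝ 1 g (Icc u v)) (hanti : AntitoneOn f (Icc u v))
    (hderiv : ∀ x ∈ Ioo u v, |deriv g x| ≤ |deriv f x|) : AntitoneOn (f - g) (Icc u v) := by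
  have hneg := monotoneOn_sub_of_abs_deriv_le hf.neg hg.neg hanti.neg fun x hx => by
    simpa only [deriv.fun_neg, abs_neg] using hderiv x hx
  intro x hx y hy hxy
  have hxy' := hneg hx hy hxy
  simp only [Pi.sub_apply] at hxy' ⊢
  linarith

end Derivative

namespace SClass

variable {f g : ℝ → ℝ} {c a A x : ℝ}

theorem continuousOn (hf : SClass f c) : ContinuousOn f (Icc 0 1) := by
  rw [← Icc_union_Icc_eq_Icc hf.hc.1.le hf.hc.2.le]
  exact hf.smoothL.continuousOn.union_of_isClosed hf.smoothR.continuousOn isClosed_Icc isClosed_Icc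

theorem lt_map (hf : SClass f c) (hx : x ∈ Ioc 0 c) : x < f x := by
  have hc := hf.hc
  have hr : 0 < x / c := div_pos hx.1 hc.1
  have hconcave := hf.concave.2 ⟨le_rfl, zero_le_one⟩ ⟨hc.1.le, hc.2.le⟩
    (sub_nonneg.2 ((div_le_one hc.1).2 hx.2)) hr.le (sub_add_cancel _ _)
  simp only [smul_eq_mul, mul_zero, zero_add, hf.f0, div_mul_cancel₀ _ hc.1.ne'] at hconcave
  calc
    x = x / c * c := (div_mul_cancel₀ _ hc.1.ne').symm
    _ < x / c * f c := mul_lt_mul_of_pos_left hf.fcgt hr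
    _ ≤ f x := hconcave

theorem unimodalMap (hf : SClass f c) (ha : a ∈ Ioo c 1) (hfa : f a = a) (hA : A ∈ Icc 0 c)
    (hfA : f A = a) : UnimodalMap f 0 1 c a A where
  A_mem := by
    refine ⟨hA.1.lt_of_ne ?_, hA.2.lt_of_ne ?_⟩
    · rintro rfl
      exact (hf.hc.1.trans ha.1).ne (hf.f0.symm.trans hfA)
    · rintro rfl
      have hlt := hf.anti ⟨le_rfl, hf.hc.2.le⟩ ⟨ha.1.le, ha.2.le⟩ ha.1
      exact hlt.ne (hfa.trans hfA.symm)
  a_mem := Ioo_subset_Ioc_self ha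
  cont := hf.continuousOn
  maps := hf.maps
  mono := hf.mono
  anti := hf.anti
  map_z := hf.f0
  map_a := hfa
  map_A := hfA
  lt_map_of_mem_Ioc := fun _ => hf.lt_map

theorem derivWithin_Icc_left (hf : SClass f c) (hx : x ∈ Ioo 0 c) :
    derivWithin f (Icc 0 x) x = deriv f x :=
  ((hf.smoothL.differentiableOn one_ne_zero).differentiableAt
    (Icc_mem_nhds hx.1 hx.2)).derivWithin (uniqueDiffOn_Icc hx.1 x ⟨hx.1.le, le_rfl⟩)

theorem derivWithin_Icc_right (hf : SClass f c) (hx : x ∈ Ioo c 1) :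
    derivWithin f (Icc x 1) x = deriv f x :=
  ((hf.smoothR.differentiableOn one_ne_zero).differentiableAt
    (Icc_mem_nhds hx.1 hx.2)).derivWithin (uniqueDiffOn_Icc hx.2 x ⟨le_rfl, hx.2.le⟩)

theorem monotoneOn_sub (hf : SClass f c) (hg : SClass g c) (hderiv : ∀ x ∈ Icc (0 : ℝ) 1,
    |derivWithin g (Icc 0 x) x| ≤ |derivWithin f (Icc 0 x) x|) : MonotoneOn (f - g) (Icc 0 c) := by
  refine monotoneOn_sub_of_abs_deriv_le hf.smoothL hg.smoothL hf.mono.monotoneOn fun x hx => ?_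
  rw [← hf.derivWithin_Icc_left hx, ← hg.derivWithin_Icc_left hx]
  exact hderiv x ⟨hx.1.le, (hx.2.trans hf.hc.2).le⟩

theorem antitoneOn_sub (hf : SClass f c) (hg : SClass g c) (hderiv : ∀ x ∈ Icc (0 : ℝ) 1,
    |derivWithin g (Icc x 1) x| ≤ |derivWithin f (Icc x 1) x|) : AntitoneOn (f - g) (Icc c 1) := by
  refine antitoneOn_sub_of_abs_deriv_le hf.smoothR hg.smoothR hf.anti.antitoneOn fun x hx => ?_
  rw [← hf.derivWithin_Icc_right hx, ← hg.derivWithin_Icc_right hx]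
  exact hderiv x ⟨(hf.hc.1.trans hx.1).le, hx.2.le⟩

end SClass

theorem stmt9 (f g : ℝ → ℝ) (c af af' ag ag' : ℝ)
    (hf : SClass f c) (hg : SClass g c)
    -- |f'(x)| ≥ |g'(x)| for every x (one-sided derivatives at the turning points)
    (hderiv : ∀ x ∈ Set.Icc (0:ℝ) 1,
      |derivWithin g (Set.Icc 0 x) x| ≤ |derivWithin f (Set.Icc 0 x) x| ∧
      |derivWithin g (Set.Icc x 1) x| ≤ |derivWithin f (Set.Icc x 1) x|)
    -- a_f and a'_f
    (haf : af ∈ Set.Ioo c 1) (hfaf : f af = af)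
    (haf' : af' ∈ Set.Icc (0:ℝ) c) (hfaf' : f af' = af)
    -- a_g and a'_g
    (hag : ag ∈ Set.Ioo c 1) (hgag : g ag = ag)
    (hag' : ag' ∈ Set.Icc (0:ℝ) c) (hgag' : g ag' = ag)
    -- |c − a_f|/|c − a'_f| ≥ |c − a_g|/|c − a'_g|
    (hratio : |c - ag| / |c - ag'| ≤ |c - af| / |c - af'|) :
    overRotInterval g (Set.Icc 0 1) ⊆ overRotInterval f (Set.Icc 0 1) := by
  exact stmt9_general (hf.unimodalMap haf hfaf haf' hfaf') (hg.unimodalMap hag hgag hag' hgag')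
    hf.concave (hf.monotoneOn_sub hg fun x hx => (hderiv x hx).1)
    (hf.antitoneOn_sub hg fun x hx => (hderiv x hx).2) (hg.f1.trans hf.f1.symm).le hratio
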